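/- arXiv:2411.04560 — 3 statements merged into one kernel-verified Lean document; each statement's English description precedes it below -/
import Mathlib

section
/- Let D be a digraph on a finite vertex set V in which every vertex has at least one in-neighbor, and suppose γ_t(D) = |V| − 1. Then every vertex of D has out-degree at most 2. -/
/-- A set `S` is a total dominating set of the digraph `D` (given as its arc
relation) if every vertex has an in-neighbor belonging to `S`. -/
def TotalDomSet {V : Type} (D : V → V → Prop) (S : Set V) : Prop :=
  ∀ v : V, ∃ u ∈ S, D u v

/-- The total domination number of a digraph: the least cardinality of a total
dominating set. -/
noncomputable def totalDomNum {V : Type} (D : V → V → Prop) : ℕ :=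
  sInf {n | ∃ S : Set V, TotalDomSet D S ∧ S.ncard = n}

/-- `D` is an orientation of the simple graph `G`: every arc of `D` lies on an
edge of `G`, and every edge of `G` carries exactly one of the two possible arcs. -/
def IsOrientation {V : Type} (G : SimpleGraph V) (D : V → V → Prop) : Prop :=
  (∀ u v : V, D u v → G.Adj u v) ∧ ∀ u v : V, G.Adj u v → (D u v ↔ ¬ D v u)

/-- An orientation (digraph) is valid if every vertex has at least one in-neighbor. -/
def IsValidOrientation {V : Type} (D : V → V → Prop) : Prop :=
  ∀ v : V, ∃ u : V, D u v

/-- The upper orientable total domination number of `G`. -/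
noncomputable def DOMt {V : Type} [Fintype V] (G : SimpleGraph V) : ℕ :=
  sSup {n | ∃ D : V → V → Prop, IsOrientation G D ∧ IsValidOrientation D ∧ totalDomNum D = n}

/-- The lower orientable total domination number of `G`. -/
noncomputable def domt {V : Type} [Fintype V] (G : SimpleGraph V) : ℕ :=
  sInf {n | ∃ D : V → V → Prop, IsOrientation G D ∧ IsValidOrientation D ∧ totalDomNum D = n}

/-! A vertex `v` dominates all of its out-neighbors, and one chosen in-neighbor for each of the
other vertices takes care of the rest. Hence `γ_t(D) ≤ 1 + (|V| - d⁺(v))` for every vertex `v`. -/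

section TotalDomination

variable {V : Type} {D : V → V → Prop}

theorem TotalDomSet.totalDomNum_le_ncard {S : Set V} (hS : TotalDomSet D S) :
    totalDomNum D ≤ S.ncard :=
  Nat.sInf_le ⟨S, hS, rfl⟩

theorem TotalDomSet.union_image_compl {A N : Set V} {f : V → V}
    (hA : ∀ w ∈ N, ∃ u ∈ A, D u w) (hf : ∀ w ∉ N, D (f w) w) :
    TotalDomSet D (A ∪ f '' Nᶜ) := by
  intro w
  by_cases hw : w ∈ N
  · obtain ⟨u, hu, huw⟩ := hA w hw
    exact ⟨u, .inl hu, huw⟩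
  · exact ⟨f w, .inr ⟨w, hw, rfl⟩, hf w hw⟩

variable [Finite V]

theorem totalDomNum_le_ncard_add_ncard_compl (hin : ∀ w, ∃ u, D u w) {A N : Set V}
    (hA : ∀ w ∈ N, ∃ u ∈ A, D u w) : totalDomNum D ≤ A.ncard + Nᶜ.ncard := by
  choose f hf using hin
  calc
    totalDomNum D ≤ (A ∪ f '' Nᶜ).ncard :=
      (TotalDomSet.union_image_compl hA fun w _ => hf w).totalDomNum_le_ncard
    _ ≤ A.ncard + (f '' Nᶜ).ncard := Set.ncard_union_le _ _
    _ ≤ A.ncard + Nᶜ.ncard := Nat.add_le_add_left Set.ncard_image_le _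

theorem totalDomNum_add_ncard_outNeighbors_le (hin : ∀ w, ∃ u, D u w) (v : V) :
    totalDomNum D + {w | D v w}.ncard ≤ Nat.card V + 1 := by
  have hdom : totalDomNum D ≤ ({v} : Set V).ncard + {w | D v w}ᶜ.ncard :=
    totalDomNum_le_ncard_add_ncard_compl hin fun _ hw => ⟨v, rfl, hw⟩
  rw [Set.ncard_singleton] at hdom
  have hcompl := Set.ncard_add_ncard_compl {w | D v w}
  omega

end TotalDomination

/-- In a digraph with all in-degrees positive whose total domination number is
`|V| - 1`, every out-degree is at most 2. -/
theorem stmt_4 {V : Type} [Fintype V] (D : V → V → Prop)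
    (hvalid : ∀ v : V, ∃ u : V, D u v)
    (hγ : totalDomNum D = Fintype.card V - 1) :
    ∀ v : V, {w : V | D v w}.ncard ≤ 2 := by
  intro v
  have hbound := totalDomNum_add_ncard_outNeighbors_le hvalid v
  have hpos : 0 < Fintype.card V := Fintype.card_pos_iff.mpr ⟨v⟩
  rw [Nat.card_eq_fintype_card] at hbound
  omega
end

section
/- For every natural number N there exists a finite connected simple graph G with |V(G)| ≥ N such that G has a valid orientation D₁ with γ_t(D₁) = 3 and a valid orientation D₂ with γ_t(D₂) = |V(G)| − 1. In particular, there are arbitrarily large graphs G with dom_t(G) = 3 and DOM_t(G) = |V(G)| − 1. -/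
/-!
If every total dominating set of a finite digraph is the whole vertex set, then every vertex has
a private out-neighbor, and by finiteness the arcs are those of a permutation. A graph with an
orientation of this kind has maximum degree at most two, so `DOM_t(G) ≤ |V(G)| - 1` as soon as
some vertex has three neighbors. In the other direction, following in-neighbors inside a total
dominating set gives three distinct vertices, so `3 ≤ dom_t(G)`. A fan (a path joined to a hub)
attains both bounds: one orientation has a dominating cyclic triangle, and another has a
Hamiltonian path in which each arc leads to a private out-neighbor.
-/

section

variable {V : Type} {G : SimpleGraph V} {D : V → V → Prop} {S : Set V}

/-- `v` is a private out-neighbor of `u`: its only in-neighbor is `u`. The equivalence also says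
that `D u v` holds. -/
def IsPrivateOutNeighbor (D : V → V → Prop) (u v : V) : Prop :=
  ∀ w, D w v ↔ w = u

theorem TotalDomSet.totalDomNum_le (hS : TotalDomSet D S) : totalDomNum D ≤ S.ncard :=
  Nat.sInf_le ⟨S, hS, rfl⟩

theorem TotalDomSet.isValidOrientation (hS : TotalDomSet D S) : IsValidOrientation D :=
  fun v => (hS v).imp fun _ h => h.2

theorem TotalDomSet.mem_of_isPrivateOutNeighbor (hS : TotalDomSet D S) {u v : V}
    (huv : IsPrivateOutNeighbor D u v) : u ∈ S := by
  obtain ⟨w, hw, hwv⟩ := hS v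
  exact (huv w).1 hwv ▸ hw

theorem IsValidOrientation.totalDomSet_univ (hD : IsValidOrientation D) :
    TotalDomSet D Set.univ :=
  fun v => (hD v).imp fun _ h => ⟨Set.mem_univ _, h⟩

theorem IsValidOrientation.le_totalDomNum (hD : IsValidOrientation D) {k : ℕ}
    (h : ∀ S, TotalDomSet D S → k ≤ S.ncard) : k ≤ totalDomNum D := by
  refine le_csInf ⟨_, _, hD.totalDomSet_univ, rfl⟩ ?_
  rintro _ ⟨S, hS, rfl⟩
  exact h S hS

theorem IsValidOrientation.ncard_le_totalDomNum [Finite V] (hD : IsValidOrientation D) {A : Set V}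
    (hA : ∀ u ∈ A, ∃ v, IsPrivateOutNeighbor D u v) : A.ncard ≤ totalDomNum D := by
  refine hD.le_totalDomNum fun S hS => Set.ncard_le_ncard fun u hu => ?_
  obtain ⟨v, huv⟩ := hA u hu
  exact hS.mem_of_isPrivateOutNeighbor huv

theorem IsValidOrientation.exists_isPrivateOutNeighbor [Finite V] (hD : IsValidOrientation D)
    (hcard : Nat.card V ≤ totalDomNum D) (u : V) : ∃ v, IsPrivateOutNeighbor D u v := by
  have not_dom : ¬ TotalDomSet D {u}ᶜ := fun hS => by
    have hlt : ({u}ᶜ : Set V).ncard < Nat.card V := Set.ncard_lt_card (by simp)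
    exact absurd hS.totalDomNum_le (by omega)
  simp only [TotalDomSet, Set.mem_compl_iff, Set.mem_singleton_iff] at not_dom
  push Not at not_dom
  obtain ⟨v, hv⟩ := not_dom
  have only_u (w : V) (hw : D w v) : w = u := by_contra fun hne => hv w hne hw
  obtain ⟨x, hx⟩ := hD v
  exact ⟨v, fun w => ⟨only_u w, fun hw => hw ▸ only_u x hx ▸ hx⟩⟩

theorem IsValidOrientation.exists_perm_of_card_le_totalDomNum [Finite V]
    (hD : IsValidOrientation D) (hcard : Nat.card V ≤ totalDomNum D) :
    ∃ σ : Equiv.Perm V, ∀ u v, D u v ↔ σ u = v := by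
  choose f hf using hD.exists_isPrivateOutNeighbor hcard
  have hinj : f.Injective := fun x y hxy => (hf y x).1 (hxy ▸ (hf x x).2 rfl)
  have hbij : f.Bijective := ⟨hinj, Finite.surjective_of_injective hinj⟩
  refine ⟨Equiv.ofBijective f hbij, fun u v => ?_⟩
  obtain ⟨w, rfl⟩ := hbij.surjective v
  exact (hf w u).trans hinj.eq_iff.symm

theorem IsOrientation.asymm (hG : IsOrientation G D) {u v : V} (h : D u v) : ¬ D v u :=
  (hG.2 u v (hG.1 u v h)).1 h

theorem IsOrientation.or_of_adj (hG : IsOrientation G D) {u v : V} (h : G.Adj u v) :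
    D u v ∨ D v u := by
  rw [hG.2 u v h]
  exact (em (D v u)).symm

theorem IsOrientation.totalDomNum_lt_card [Finite V] (hG : IsOrientation G D)
    (hD : IsValidOrientation D) {v : V} (hv : 2 < (G.neighborSet v).ncard) :
    totalDomNum D < Nat.card V := by
  by_contra! hcard
  obtain ⟨σ, hσ⟩ := hD.exists_perm_of_card_le_totalDomNum hcard
  have neighbors : G.neighborSet v ⊆ {σ v, σ.symm v} := fun w hw => by
    rcases hG.or_of_adj hw with hvw | hwv
    · exact Or.inl ((hσ v w).1 hvw).symm
    · exact Or.inr (σ.eq_symm_apply.2 ((hσ w v).1 hwv))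
  have two : ({σ v, σ.symm v} : Set V).ncard ≤ 2 := by
    simpa using Set.ncard_insert_le (σ v) {σ.symm v}
  exact hv.not_ge ((Set.ncard_le_ncard neighbors).trans two)

theorem IsOrientation.three_le_totalDomNum [Finite V] [Nonempty V] (hG : IsOrientation G D)
    (hD : IsValidOrientation D) : 3 ≤ totalDomNum D := by
  refine hD.le_totalDomNum fun S hS => ?_
  obtain ⟨a, ha, -⟩ := hS (Classical.arbitrary V)
  obtain ⟨b, hb, hba⟩ := hS a
  obtain ⟨c, hc, hcb⟩ := hS b
  have hac : a ≠ c := fun h => hG.asymm hba (h ▸ hcb)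
  exact (Set.two_lt_ncard_iff S.toFinite).2
    ⟨a, b, c, ha, hb, hc, (hG.1 b a hba).ne', hac, (hG.1 c b hcb).ne'⟩

theorem IsOrientation.totalDomNum_eq_three [Finite V] (hG : IsOrientation G D) {a b c : V}
    (hS : TotalDomSet D {a, b, c}) : totalDomNum D = 3 := by
  classical
  have : Nonempty V := ⟨a⟩
  have three : ({a, b, c} : Set V).ncard ≤ 3 := by
    simpa [← Set.ncard_coe_finset] using Finset.card_le_three (a := a) (b := b) (c := c)
  exact le_antisymm (hS.totalDomNum_le.trans three)
    (hG.three_le_totalDomNum hS.isValidOrientation)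

theorem IsOrientation.domt_eq_three [Fintype V] [Nonempty V] (hG : IsOrientation G D)
    (hD : IsValidOrientation D) (h : totalDomNum D = 3) : domt G = 3 := by
  refine IsLeast.csInf_eq ⟨⟨D, hG, hD, h⟩, ?_⟩
  rintro _ ⟨D', hG', hD', rfl⟩
  exact hG'.three_le_totalDomNum hD'

theorem IsOrientation.DOMt_eq_card_sub_one [Fintype V] (hG : IsOrientation G D)
    (hD : IsValidOrientation D) (h : totalDomNum D = Fintype.card V - 1) {v : V}
    (hv : 2 < (G.neighborSet v).ncard) : DOMt G = Fintype.card V - 1 := by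
  refine IsGreatest.csSup_eq ⟨⟨D, hG, hD, h⟩, ?_⟩
  rintro _ ⟨D', hG', hD', rfl⟩
  rw [← Nat.card_eq_fintype_card]
  exact Nat.le_sub_one_of_lt (hG'.totalDomNum_lt_card hD' hv)

end

section Fan

variable {n : ℕ}

/-- The fan on `n + 1` vertices: the path `1, 2, …, n` together with the hub `0`, which is joined
to all of them. The edge `{0, 1}` is in both graphs of the union. -/
def fanGraph (n : ℕ) : SimpleGraph (Fin (n + 1)) :=
  SimpleGraph.starGraph 0 ⊔ SimpleGraph.pathGraph (n + 1)

/-- The orientation of the fan with the path directed `1 → 2 → ⋯ → n` in which the hub receives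
an arc from `2` and dominates all other path vertices, so that `0 → 1 → 2 → 0` is a
cyclic triangle. -/
def fanHubOut (n : ℕ) (u v : Fin (n + 1)) : Prop :=
  (u.val = 0 ∧ v.val ≠ 0 ∧ v.val ≠ 2) ∨ (u.val = 2 ∧ v.val = 0) ∨
    (u.val ≠ 0 ∧ u.val + 1 = v.val)

/-- The orientation of the fan in which the Hamiltonian path is directed `0 → 1 → ⋯ → n`, and all
other arcs point to the hub. -/
def fanHubIn (n : ℕ) (u v : Fin (n + 1)) : Prop :=
  u.val + 1 = v.val ∨ (2 ≤ u.val ∧ v.val = 0)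

theorem fanGraph_adj {u v : Fin (n + 1)} :
    (fanGraph n).Adj u v ↔
      u ≠ v ∧ (u = 0 ∨ v = 0) ∨ (u.val + 1 = v.val ∨ v.val + 1 = u.val) := by
  rw [fanGraph, SimpleGraph.sup_adj, SimpleGraph.starGraph_adj, SimpleGraph.pathGraph_adj]

theorem isUniversal_fanGraph_zero (n : ℕ) : (fanGraph n).IsUniversal 0 :=
  fun _ hv => Or.inl (SimpleGraph.starGraph_center_adj hv)

theorem ncard_neighborSet_fanGraph_zero (n : ℕ) : ((fanGraph n).neighborSet 0).ncard = n := by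
  rw [(isUniversal_fanGraph_zero n).neighborSet_eq, Set.ncard_compl, Set.ncard_singleton,
    Nat.card_fin, Nat.add_sub_cancel]

theorem isOrientation_fanHubOut (n : ℕ) : IsOrientation (fanGraph n) (fanHubOut n) := by
  constructor <;> intro u v <;>
    simp only [fanGraph_adj, fanHubOut, ne_eq, Fin.ext_iff, Fin.val_zero] <;> omega

theorem isOrientation_fanHubIn (n : ℕ) : IsOrientation (fanGraph n) (fanHubIn n) := by
  constructor <;> intro u v <;>
    simp only [fanGraph_adj, fanHubIn, ne_eq, Fin.ext_iff, Fin.val_zero] <;> omega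

theorem totalDomSet_fanHubOut (hn : 2 ≤ n) :
    TotalDomSet (fanHubOut n) {0, ⟨1, by omega⟩, ⟨2, by omega⟩} := by
  intro v
  by_cases h0 : v.val = 0
  · exact ⟨⟨2, by omega⟩, by simp, by simp [fanHubOut, h0]⟩
  by_cases h2 : v.val = 2
  · exact ⟨⟨1, by omega⟩, by simp, by simp [fanHubOut, h2]⟩
  · exact ⟨0, by simp, by simp [fanHubOut, h0, h2]⟩

theorem isValidOrientation_fanHubOut (hn : 2 ≤ n) : IsValidOrientation (fanHubOut n) :=
  (totalDomSet_fanHubOut hn).isValidOrientation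

theorem totalDomNum_fanHubOut (hn : 2 ≤ n) : totalDomNum (fanHubOut n) = 3 :=
  (isOrientation_fanHubOut n).totalDomNum_eq_three (totalDomSet_fanHubOut hn)

theorem isValidOrientation_fanHubIn (hn : 2 ≤ n) : IsValidOrientation (fanHubIn n) := by
  intro v
  cases v using Fin.cases with
  | zero => exact ⟨Fin.last n, Or.inr ⟨hn, rfl⟩⟩
  | succ i => exact ⟨i.castSucc, Or.inl rfl⟩

theorem isPrivateOutNeighbor_fanHubIn (i : Fin n) :
    IsPrivateOutNeighbor (fanHubIn n) i.castSucc i.succ := fun w => by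
  simp only [fanHubIn, Fin.ext_iff, Fin.val_succ, Fin.val_castSucc]
  omega

theorem totalDomNum_fanHubIn (hn : 3 ≤ n) : totalDomNum (fanHubIn n) = n := by
  have hD := isValidOrientation_fanHubIn (n := n) (by omega)
  apply le_antisymm
  · have hlt := (isOrientation_fanHubIn n).totalDomNum_lt_card hD
      (hn.trans_eq (ncard_neighborSet_fanGraph_zero n).symm)
    rw [Nat.card_fin] at hlt
    exact Nat.le_of_lt_succ hlt
  · calc
      n = (Set.range (Fin.castSucc (n := n))).ncard := by
        rw [Set.ncard_range_of_injective (Fin.castSucc_injective n), Nat.card_fin]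
      _ ≤ totalDomNum (fanHubIn n) := hD.ncard_le_totalDomNum <|
        Set.forall_mem_range.2 fun i => ⟨i.succ, isPrivateOutNeighbor_fanHubIn i⟩

theorem domt_fanGraph (hn : 2 ≤ n) : domt (fanGraph n) = 3 :=
  (isOrientation_fanHubOut n).domt_eq_three (isValidOrientation_fanHubOut hn)
    (totalDomNum_fanHubOut hn)

theorem DOMt_fanGraph (hn : 3 ≤ n) : DOMt (fanGraph n) = n := by
  simpa using (isOrientation_fanHubIn n).DOMt_eq_card_sub_one
    (isValidOrientation_fanHubIn (by omega)) (by simpa using totalDomNum_fanHubIn hn)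
    (hn.trans_eq (ncard_neighborSet_fanGraph_zero n).symm)

end Fan

/-- There are arbitrarily large finite connected simple graphs having a valid
orientation with total domination number 3 and a valid orientation with total
domination number `|V(G)| - 1`; in particular, arbitrarily large graphs with
`dom_t(G) = 3` and `DOM_t(G) = |V(G)| - 1`. -/
theorem stmt_18 :
    ∀ N : ℕ, ∃ (n : ℕ) (G : SimpleGraph (Fin n)),
      N ≤ n ∧ G.Connected ∧
      (∃ D₁ : Fin n → Fin n → Prop, IsOrientation G D₁ ∧ IsValidOrientation D₁ ∧
        totalDomNum D₁ = 3) ∧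
      (∃ D₂ : Fin n → Fin n → Prop, IsOrientation G D₂ ∧ IsValidOrientation D₂ ∧
        totalDomNum D₂ = n - 1) ∧
      domt G = 3 ∧ DOMt G = n - 1 := by
  intro N
  have hn : 3 ≤ N + 3 := Nat.le_add_left 3 N
  have hn' : 2 ≤ N + 3 := Nat.le_of_succ_le hn
  refine ⟨N + 3 + 1, fanGraph (N + 3), by omega, .of_isUniversal (isUniversal_fanGraph_zero _),
    ⟨fanHubOut _, isOrientation_fanHubOut _, isValidOrientation_fanHubOut hn',
      totalDomNum_fanHubOut hn'⟩,
    ⟨fanHubIn _, isOrientation_fanHubIn _, isValidOrientation_fanHubIn hn',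
      totalDomNum_fanHubIn hn⟩,
    domt_fanGraph hn', DOMt_fanGraph hn⟩
end

section
/- For every integer m ≥ 3 there exists a finite connected simple graph G admitting a valid orientation such that dom_t(G) = m and DOM_t(G) = |V(G)| − 1; that is, some valid orientation D₁ of G has γ_t(D₁) = m, every valid orientation D of G satisfies m ≤ γ_t(D) ≤ |V(G)| − 1, and some valid orientation D₂ of G has γ_t(D₂) = |V(G)| − 1. -/
section Digraph

variable {V : Type} {D : V → V → Prop}

/-- The set of arcs of a digraph given as its arc relation, as ordered pairs (tail, head). -/
def arcSet (D : V → V → Prop) : Set (V × V) :=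
  {a | D a.1 a.2}

theorem isValidOrientation_of_existsUnique (h : ∀ v, ∃! u, D u v) : IsValidOrientation D :=
  fun v ↦ (h v).exists

theorem surjective_arcSet_head_iff :
    Function.Surjective (fun a : arcSet D ↦ a.1.2) ↔ IsValidOrientation D := by
  simp [Function.Surjective, IsValidOrientation, arcSet]

theorem bijective_arcSet_head_iff :
    Function.Bijective (fun a : arcSet D ↦ a.1.2) ↔ ∀ v, ∃! u, D u v := by
  refine ⟨fun h v ↦ ?_, fun h ↦ ⟨?_, fun v ↦ ?_⟩⟩
  · obtain ⟨u, huv⟩ := surjective_arcSet_head_iff.1 h.2 v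
    refine ⟨u, huv, fun w hwv ↦ ?_⟩
    have harc : (⟨(w, v), hwv⟩ : arcSet D) = ⟨(u, v), huv⟩ := h.1 rfl
    exact congrArg (fun a ↦ a.1.1) harc
  · rintro ⟨⟨u, v⟩, huv⟩ ⟨⟨w, _⟩, hwv⟩ rfl
    obtain rfl := (h v).unique huv hwv
    rfl
  · exact surjective_arcSet_head_iff.2 (isValidOrientation_of_existsUnique h) v

theorem totalDomSet_iff_of_existsUnique (h : ∀ v, ∃! u, D u v) {S : Set V} :
    TotalDomSet D S ↔ {u | ∃ v, D u v} ⊆ S := by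
  refine ⟨fun hS u ⟨v, huv⟩ ↦ ?_, fun hS v ↦ ?_⟩
  · obtain ⟨w, hwS, hwv⟩ := hS v
    rwa [(h v).unique huv hwv]
  · obtain ⟨u, huv⟩ := (h v).exists
    exact ⟨u, hS ⟨v, huv⟩, huv⟩

theorem totalDomNum_eq_of_existsUnique [Finite V] (h : ∀ v, ∃! u, D u v) :
    totalDomNum D = {u | ∃ v, D u v}.ncard := by
  refine IsLeast.csInf_eq ⟨⟨_, (totalDomSet_iff_of_existsUnique h).2 subset_rfl, rfl⟩, ?_⟩
  rintro _ ⟨S, hS, rfl⟩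
  exact Set.ncard_le_ncard ((totalDomSet_iff_of_existsUnique h).1 hS)

theorem isOrientation_fromRel (h : ∀ u v, D u v → ¬ D v u) :
    IsOrientation (SimpleGraph.fromRel D) D := by
  refine ⟨fun u v huv ↦ ⟨?_, Or.inl huv⟩, fun u v huv ↦ ⟨h u v, huv.2.resolve_right⟩⟩
  rintro rfl
  exact h u u huv huv

end Digraph

namespace IsOrientation

variable {V : Type} {G : SimpleGraph V} {D : V → V → Prop}

theorem asymm_s19 (hD : IsOrientation G D) {u v : V} (huv : D u v) : ¬ D v u :=
  (hD.2 u v (hD.1 u v huv)).1 huv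

theorem adj_iff (hD : IsOrientation G D) {u v : V} : G.Adj u v ↔ D u v ∨ D v u := by
  refine ⟨fun huv ↦ ?_, ?_⟩
  · rw [hD.2 u v huv]
    exact (em _).symm
  · rintro (huv | hvu)
    · exact hD.1 u v huv
    · exact (hD.1 v u hvu).symm

theorem card_arcSet (hD : IsOrientation G D) : Nat.card (arcSet D) = Nat.card G.edgeSet := by
  refine Nat.card_eq_of_bijective (fun a ↦ ⟨s(a.1.1, a.1.2), hD.1 _ _ a.2⟩) ⟨?_, ?_⟩
  · rintro ⟨⟨u, v⟩, huv⟩ ⟨⟨w, x⟩, hwx⟩ hedge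
    rcases Sym2.eq_iff.1 (congrArg Subtype.val hedge) with ⟨rfl, rfl⟩ | ⟨rfl, rfl⟩
    · rfl
    · exact absurd hwx (hD.asymm_s19 huv)
  · rintro ⟨⟨u, v⟩, huv⟩
    rcases hD.adj_iff.1 huv with h | h
    · exact ⟨⟨(u, v), h⟩, rfl⟩
    · exact ⟨⟨(v, u), h⟩, Subtype.ext Sym2.eq_swap⟩

theorem card_edgeSet_eq_iff [Finite V] (hD : IsOrientation G D) (hV : IsValidOrientation D) :
    Nat.card G.edgeSet = Nat.card V ↔ ∀ v, ∃! u, D u v := by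
  rw [← hD.card_arcSet, ← bijective_arcSet_head_iff]
  exact ⟨fun h ↦ (surjective_arcSet_head_iff.2 hV).bijective_of_nat_card_le h.le,
    Nat.card_eq_of_bijective _⟩

theorem exists_arc_iff_nontrivial_neighborSet (hD : IsOrientation G D) {v : V}
    (h : ∃! u, D u v) : (∃ w, D v w) ↔ (G.neighborSet v).Nontrivial := by
  obtain ⟨u, huv, hu⟩ := h
  have hmem : u ∈ G.neighborSet v := hD.adj_iff.2 (Or.inr huv)
  rw [Set.nontrivial_iff_exists_ne hmem]
  refine ⟨fun ⟨w, hvw⟩ ↦ ⟨w, hD.1 v w hvw, ?_⟩, fun ⟨w, hvw, hne⟩ ↦ ⟨w, ?_⟩⟩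
  · rintro rfl
    exact hD.asymm_s19 huv hvw
  · exact (hD.adj_iff.1 hvw).resolve_right fun hwv ↦ hne (hu w hwv)

theorem totalDomNum_eq_of_card_edgeSet_eq [Finite V] (hD : IsOrientation G D)
    (hV : IsValidOrientation D) (hcard : Nat.card G.edgeSet = Nat.card V) :
    totalDomNum D = {v | (G.neighborSet v).Nontrivial}.ncard := by
  have hunique := (hD.card_edgeSet_eq_iff hV).1 hcard
  rw [totalDomNum_eq_of_existsUnique hunique]
  simp only [hD.exists_arc_iff_nontrivial_neighborSet (hunique _)]

theorem totalDomNum_eq_totalDomNum_of_existsUnique [Finite V] {D' : V → V → Prop}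
    (hD : IsOrientation G D) (hV : IsValidOrientation D) (hD' : IsOrientation G D')
    (h' : ∀ v, ∃! u, D' u v) : totalDomNum D = totalDomNum D' := by
  have hV' := isValidOrientation_of_existsUnique h'
  have hcard := (hD'.card_edgeSet_eq_iff hV').2 h'
  rw [hD.totalDomNum_eq_of_card_edgeSet_eq hV hcard,
    hD'.totalDomNum_eq_of_card_edgeSet_eq hV' hcard]

end IsOrientation

section Pan

variable {m : ℕ}

/-- The arcs of the directed cycle `0 → 1 → ⋯ → m - 1 → 0` together with the pendant arc
`m - 1 → m`. -/
def PanArc (m : ℕ) (u v : Fin (m + 1)) : Prop :=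
  (u : ℕ) + 1 = v ∨ (u : ℕ) + 1 = m ∧ (v : ℕ) = 0

/-- The `m`-pan graph, for `m ≥ 3`: the cycle on `0, …, m - 1` with a pendant vertex `m` attached
to `m - 1`. -/
def panGraph (m : ℕ) : SimpleGraph (Fin (m + 1)) :=
  SimpleGraph.fromRel (PanArc m)

theorem connected_panGraph (m : ℕ) : (panGraph m).Connected := by
  refine (SimpleGraph.pathGraph_connected m).mono fun u v huv ↦ ?_
  exact ⟨huv.ne, (SimpleGraph.pathGraph_adj.1 huv).imp Or.inl Or.inl⟩

theorem isOrientation_panArc (hm : 3 ≤ m) : IsOrientation (panGraph m) (PanArc m) :=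
  isOrientation_fromRel fun u v ↦ by
    simp only [PanArc]
    lia

theorem existsUnique_panArc (hm : m ≠ 0) (v : Fin (m + 1)) : ∃! u, PanArc m u v := by
  induction v using Fin.cases with
  | zero =>
    refine ⟨⟨m - 1, by lia⟩, Or.inr ⟨Nat.succ_pred hm, rfl⟩, fun u hu ↦ Fin.ext ?_⟩
    simp only [PanArc, Fin.val_zero] at hu
    change (u : ℕ) = m - 1
    lia
  | succ i =>
    refine ⟨i.castSucc, Or.inl rfl, fun u hu ↦ Fin.ext ?_⟩
    simp only [PanArc, Fin.val_succ] at hu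
    rw [Fin.val_castSucc]
    lia

theorem exists_panArc_iff {u : Fin (m + 1)} : (∃ v, PanArc m u v) ↔ u ≠ Fin.last m := by
  refine ⟨?_, fun hu ↦ ⟨⟨u + 1, by have := Fin.val_lt_last hu; lia⟩, Or.inl rfl⟩⟩
  rintro ⟨v, hv⟩ rfl
  simp only [PanArc, Fin.val_last] at hv
  lia

theorem totalDomNum_panArc (hm : m ≠ 0) : totalDomNum (PanArc m) = m := by
  rw [totalDomNum_eq_of_existsUnique (existsUnique_panArc hm)]
  simp only [exists_panArc_iff]
  rw [← Set.compl_singleton_eq, Set.ncard_compl, Set.ncard_singleton, Nat.card_eq_fintype_card,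
    Fintype.card_fin, Nat.add_sub_cancel]

end Pan

/-- For every `m ≥ 3` there is a finite connected simple graph `G` admitting a
valid orientation with `dom_t(G) = m` and `DOM_t(G) = |V(G)| - 1`: some valid
orientation attains `m`, every valid orientation has total domination number
between `m` and `|V(G)| - 1`, and some valid orientation attains `|V(G)| - 1`. -/
theorem stmt_19 :
    ∀ m : ℕ, 3 ≤ m → ∃ (n : ℕ) (G : SimpleGraph (Fin n)),
      G.Connected ∧
      (∃ D₁ : Fin n → Fin n → Prop, IsOrientation G D₁ ∧ IsValidOrientation D₁ ∧
        totalDomNum D₁ = m) ∧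
      (∀ D : Fin n → Fin n → Prop, IsOrientation G D → IsValidOrientation D →
        m ≤ totalDomNum D ∧ totalDomNum D ≤ n - 1) ∧
      (∃ D₂ : Fin n → Fin n → Prop, IsOrientation G D₂ ∧ IsValidOrientation D₂ ∧
        totalDomNum D₂ = n - 1) := by
  intro m hm
  have hpan := isOrientation_panArc hm
  have hunique := existsUnique_panArc (show m ≠ 0 by lia)
  have hvalid := isValidOrientation_of_existsUnique hunique
  have hnum := totalDomNum_panArc (show m ≠ 0 by lia)
  refine ⟨m + 1, panGraph m, connected_panGraph m, ⟨PanArc m, hpan, hvalid, hnum⟩,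
    fun D hD hV ↦ ?_, ⟨PanArc m, hpan, hvalid, hnum⟩⟩
  rw [hD.totalDomNum_eq_totalDomNum_of_existsUnique hV hpan hunique, hnum]
  exact ⟨le_rfl, le_rfl⟩
end
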